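/- arXiv:1804.03069 — 4 statements merged into one kernel-verified Lean document; each statement's English description precedes it below -/
import Mathlib

section
/- Let k ≥ 1 be an integer, let a ≥ 0 and b ≥ 1 be fixed reals. Then as m → ∞, ∫_0^∞ x^{b-1} e^{-a x} (Γ(k,x)/Γ(k))^m dx = (1 + O(m^{-1/(2k)})) · (k!)^{b/k} Γ(b/k) m^{-b/k} / k. -/
open MeasureTheory Real Set

/-- The upper incomplete gamma function `Γ(k,x) = ∫_x^∞ t^{k-1} e^{-t} dt`. -/
noncomputable def upperGamma (k : ℕ) (x : ℝ) : ℝ :=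
  ∫ t in Set.Ioi x, t ^ (k - 1) * Real.exp (-t)

lemma ug_int0 (n : ℕ) : IntegrableOn (fun t : ℝ => t ^ n * Real.exp (-t)) (Ioi 0) := by
  have h := Real.GammaIntegral_convergent (s := (n : ℝ) + 1) (by positivity)
  refine h.congr_fun ?_ measurableSet_Ioi
  intro t ht
  simp only [add_sub_cancel_right, Real.rpow_natCast]
  ring

lemma ug_int (n : ℕ) {x : ℝ} (hx : 0 ≤ x) :
    IntegrableOn (fun t : ℝ => t ^ n * Real.exp (-t)) (Ioi x) :=
  (ug_int0 n).mono_set (Ioi_subset_Ioi hx)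

lemma ug_zero (n : ℕ) : ∫ t in Ioi (0:ℝ), t ^ n * Real.exp (-t) = (n.factorial : ℝ) := by
  rw [← Real.Gamma_nat_eq_factorial, Real.Gamma_eq_integral (by positivity)]
  refine setIntegral_congr_fun measurableSet_Ioi ?_
  intro t ht
  simp only [add_sub_cancel_right, Real.rpow_natCast]
  ring

/-- normalised upper gamma -/
noncomputable def ugQ (n : ℕ) (x : ℝ) : ℝ := upperGamma (n + 1) x / (n.factorial : ℝ)

lemma ugQ_eq (n : ℕ) {x : ℝ} (hx : 0 ≤ x) :
    ugQ n x = 1 - (∫ t in (0:ℝ)..x, t ^ n * Real.exp (-t)) / (n.factorial : ℝ) := by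
  have h := intervalIntegral.integral_Ioi_sub_Ioi (ug_int0 n) hx
  rw [ug_zero] at h
  have hn : (n.factorial : ℝ) ≠ 0 := by positivity
  unfold ugQ upperGamma
  simp only [Nat.add_sub_cancel]
  rw [← h]
  field_simp
  ring

lemma ugQ_nonneg (n : ℕ) {x : ℝ} (hx : 0 ≤ x) : 0 ≤ ugQ n x := by
  unfold ugQ upperGamma
  refine div_nonneg (setIntegral_nonneg measurableSet_Ioi ?_) (by positivity)
  intro t ht
  have : 0 < t := lt_of_le_of_lt hx ht
  positivity

lemma ug_cont (n : ℕ) : Continuous (fun t : ℝ => t ^ n * Real.exp (-t)) := by fun_prop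

lemma ugQ_contOn (n : ℕ) : ContinuousOn (ugQ n) (Ioi 0) := by
  have h : Continuous (fun x : ℝ =>
      1 - (∫ t in (0:ℝ)..x, t ^ n * Real.exp (-t)) / (n.factorial : ℝ)) := by
    refine continuous_const.sub (Continuous.div_const ?_ _)
    exact intervalIntegral.continuous_primitive (fun a b => (ug_cont n).intervalIntegrable a b) 0
  exact h.continuousOn.congr (fun x hx => ugQ_eq n (le_of_lt hx))

lemma ugQ_anti (n : ℕ) {x y : ℝ} (hx : 0 ≤ x) (hxy : x ≤ y) : ugQ n y ≤ ugQ n x := by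
  unfold ugQ upperGamma
  simp only [Nat.add_sub_cancel]
  refine div_le_div_of_nonneg_right ?_ (by positivity)
  refine setIntegral_mono_set (ug_int n hx) ?_ (Ioi_subset_Ioi hxy).eventuallyLE
  refine (ae_restrict_iff' measurableSet_Ioi).2 (Filter.Eventually.of_forall ?_)
  intro t ht
  have : 0 < t := lt_of_le_of_lt hx ht
  simp only [Pi.zero_apply]
  positivity

lemma ug_fact (n : ℕ) (x : ℝ) :
    x ^ (n + 1) / ((n + 1 : ℕ) : ℝ) / (n.factorial : ℝ) = x ^ (n + 1) / ((n + 1).factorial : ℝ) := by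
  rw [Nat.factorial_succ, Nat.cast_mul, div_div]

lemma ugQ_lower (n : ℕ) {x : ℝ} (hx : 0 ≤ x) :
    1 - x ^ (n + 1) / ((n + 1).factorial : ℝ) ≤ ugQ n x := by
  rw [ugQ_eq n hx, ← ug_fact]
  gcongr
  have h : ∫ t in (0:ℝ)..x, t ^ n = x ^ (n + 1) / ((n + 1 : ℕ) : ℝ) := by
    rw [integral_pow]; simp
  rw [← h]
  refine intervalIntegral.integral_mono_on hx ((ug_cont n).intervalIntegrable _ _)
    ((continuous_pow n).intervalIntegrable _ _) ?_
  intro t ht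
  have h1 : Real.exp (-t) ≤ 1 := Real.exp_le_one_iff.2 (by linarith [ht.1])
  have h2 : 0 ≤ t ^ n := pow_nonneg ht.1 n
  nlinarith

lemma ugQ_upper (n : ℕ) {x : ℝ} (hx : 0 ≤ x) :
    ugQ n x ≤ 1 - Real.exp (-x) * (x ^ (n + 1) / ((n + 1).factorial : ℝ)) := by
  rw [ugQ_eq n hx, ← ug_fact, ← mul_div_assoc]
  gcongr
  have h : ∫ t in (0:ℝ)..x, t ^ n * Real.exp (-x)
      = Real.exp (-x) * (x ^ (n + 1) / ((n + 1 : ℕ) : ℝ)) := by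
    rw [intervalIntegral.integral_mul_const, integral_pow]; simp; ring
  rw [← h]
  refine intervalIntegral.integral_mono_on hx
    (Continuous.intervalIntegrable (by fun_prop) _ _) ((ug_cont n).intervalIntegrable _ _) ?_
  intro t ht
  have h2 : 0 ≤ t ^ n := pow_nonneg ht.1 n
  have h3 : Real.exp (-x) ≤ Real.exp (-t) := Real.exp_le_exp.2 (by linarith [ht.2])
  exact mul_le_mul_of_nonneg_left h3 h2

lemma ugQ_le_one (n : ℕ) {x : ℝ} (hx : 0 ≤ x) : ugQ n x ≤ 1 := by
  have := ugQ_upper n hx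
  have h : 0 ≤ Real.exp (-x) * (x ^ (n + 1) / ((n + 1).factorial : ℝ)) := by positivity
  linarith

lemma ugQ_decay (n : ℕ) {x : ℝ} (hx : 0 ≤ x) :
    ugQ n x ≤ 2 ^ (n + 1) * Real.exp (-(1 / 2) * x) := by
  unfold ugQ upperGamma
  simp only [Nat.add_sub_cancel]
  rw [div_le_iff₀ (by positivity)]
  have h := integral_exp_mul_Ioi (a := -(1/2)) (by norm_num) x
  have h2 : ∫ t in Ioi x, t ^ n * Real.exp (-t)
      ≤ ∫ t in Ioi x, (n.factorial * 2 ^ n : ℝ) * Real.exp (-(1 / 2) * t) := by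
    refine setIntegral_mono_on (ug_int n hx)
      ((integrableOn_exp_mul_Ioi (by norm_num) x).const_mul _) measurableSet_Ioi ?_
    intro t ht
    have ht0 : 0 < t := lt_of_le_of_lt hx ht
    have h3 := Real.pow_div_factorial_le_exp (t / 2) (by positivity) n
    rw [div_le_iff₀ (by positivity), div_pow, div_le_iff₀ (by positivity)] at h3
    calc t ^ n * Real.exp (-t) ≤ (Real.exp (t / 2) * n.factorial * 2 ^ n) * Real.exp (-t) := by gcongr
      _ = (n.factorial * 2 ^ n : ℝ) * (Real.exp (t / 2) * Real.exp (-t)) := by ring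
      _ = _ := by rw [← Real.exp_add]; congr 2; ring
  rw [integral_const_mul, h] at h2
  refine h2.trans (le_of_eq ?_)
  rw [pow_succ]; ring

/-- pointwise estimate near zero -/
lemma ug_near (n : ℕ) {a : ℝ} (ha : 0 ≤ a) {x : ℝ} (hx : 0 < x) (hx1 : x ≤ 1) (m : ℕ)
    {c : ℝ} (hc : c = Real.exp (-1) / ((n + 1).factorial : ℝ)) :
    |Real.exp (-a * x) * ugQ n x ^ m - Real.exp (-(m / ((n + 1).factorial : ℝ)) * x ^ (n + 1))|
      ≤ (a * x + m * Real.exp c * x ^ (n + 2)) * Real.exp (-(c * m) * x ^ (n + 1)) := by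
  set u : ℝ := x ^ (n + 1) / ((n + 1).factorial : ℝ) with hu
  have hu0 : 0 ≤ u := by positivity
  have hf1 : (1:ℝ) ≤ ((n + 1).factorial : ℝ) := by exact_mod_cast Nat.factorial_pos (n + 1)
  have hxp : 0 ≤ x ^ (n + 1) := by positivity
  have hxk : x ^ (n + 1) ≤ x := by
    have := pow_le_of_le_one hx.le hx1 (Nat.succ_ne_zero n); simpa using this
  have hux : u ≤ x ^ (n + 1) := div_le_self hxp hf1
  have hu1 : u ≤ 1 := by linarith
  have hlow := ugQ_lower n hx.le
  have hup := ugQ_upper n hx.le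
  rw [← hu] at hlow hup
  have hcx : c * x ^ (n + 1) = Real.exp (-1) * u := by rw [hc, hu]; ring
  have he1 : Real.exp (-1) ≤ Real.exp (-x) := Real.exp_le_exp.2 (by linarith)
  have he2 : 1 - x ≤ Real.exp (-x) := by linarith [Real.add_one_le_exp (-x)]
  have hem1 : Real.exp (-1) ≤ 1 := Real.exp_le_one_iff.2 (by norm_num)
  have hG0 := ugQ_nonneg n hx.le
  have hGc : ugQ n x ≤ Real.exp (-(c * x ^ (n + 1))) := by
    have := Real.add_one_le_exp (-(c * x ^ (n + 1)))
    have h2 : Real.exp (-1) * u ≤ Real.exp (-x) * u := by gcongr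
    linarith
  have hBc : Real.exp (-u) ≤ Real.exp (-(c * x ^ (n + 1))) := by
    apply Real.exp_le_exp.2
    rw [hcx]; nlinarith
  have hB := Real.abs_exp_sub_one_sub_id_le (x := -u) (by rw [abs_neg, abs_of_nonneg hu0]; exact hu1)
  rw [abs_le] at hB
  have hBl := Real.add_one_le_exp (-u)
  have hd : |ugQ n x - Real.exp (-u)| ≤ x ^ (n + 2) := by
    have h1 : x * u ≤ x ^ (n + 2) := by
      rw [pow_succ x (n + 1), mul_comm]; gcongr
    have h2 : u ^ 2 ≤ x * u := by nlinarith
    have h3 : (1 - x) * u ≤ Real.exp (-x) * u := by gcongr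
    rw [abs_le]
    constructor <;> nlinarith
  have hBm : Real.exp (-(m / ((n + 1).factorial : ℝ)) * x ^ (n + 1)) = Real.exp (-u) ^ m := by
    rw [← Real.exp_nat_mul]; congr 1; rw [hu]; ring
  have hEm : Real.exp (-(c * m) * x ^ (n + 1)) = Real.exp (-(c * x ^ (n + 1))) ^ m := by
    rw [← Real.exp_nat_mul]; congr 1; ring
  rw [hBm, hEm]
  set E := Real.exp (-(c * x ^ (n + 1))) with hE
  have hE0 : 0 < E := Real.exp_pos _
  have hc0 : 0 < c := by rw [hc]; positivity
  have hEc : 1 ≤ Real.exp c * E := by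
    rw [hE, ← Real.exp_add]; apply Real.one_le_exp
    nlinarith
  have hpow : |ugQ n x ^ m - Real.exp (-u) ^ m| ≤ m * Real.exp c * x ^ (n + 2) * E ^ m := by
    rcases Nat.eq_zero_or_pos m with rfl | hm
    · simp
    have h := abs_pow_sub_pow_le (ugQ n x) (Real.exp (-u)) m
    have hmax : max |ugQ n x| |Real.exp (-u)| ≤ E := by
      rw [abs_of_nonneg hG0, abs_of_pos (Real.exp_pos _)]; exact max_le hGc hBc
    have hmax0 : 0 ≤ max |ugQ n x| |Real.exp (-u)| := le_max_of_le_left (abs_nonneg _)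
    obtain ⟨p, rfl⟩ : ∃ p, m = p + 1 := ⟨m - 1, by omega⟩
    calc _ ≤ _ := h
      _ ≤ x ^ (n + 2) * ((p + 1 : ℕ) : ℝ) * E ^ p := by
          rw [Nat.add_sub_cancel]; gcongr
      _ = x ^ (n + 2) * ((p + 1 : ℕ) : ℝ) * E ^ p * 1 := by ring
      _ ≤ x ^ (n + 2) * ((p + 1 : ℕ) : ℝ) * E ^ p * (Real.exp c * E) := by gcongr
      _ = _ := by ring
  have hfirst : |Real.exp (-a * x) * ugQ n x ^ m - ugQ n x ^ m| ≤ a * x * E ^ m := by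
    have h1 : Real.exp (-a * x) ≤ 1 := Real.exp_le_one_iff.2 (by nlinarith)
    have h2 : 1 - a * x ≤ Real.exp (-a * x) := by linarith [Real.add_one_le_exp (-a * x)]
    have h3 : |Real.exp (-a * x) - 1| ≤ a * x := by
      rw [abs_le]; constructor <;> nlinarith
    rw [← sub_one_mul, abs_mul, abs_of_nonneg (pow_nonneg hG0 m)]
    gcongr
  calc _ ≤ |Real.exp (-a * x) * ugQ n x ^ m - ugQ n x ^ m| + |ugQ n x ^ m - Real.exp (-u) ^ m| :=
        abs_sub_le _ _ _
    _ ≤ a * x * E ^ m + m * Real.exp c * x ^ (n + 2) * E ^ m := add_le_add hfirst hpow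
    _ = _ := by ring

/-- pointwise estimate away from zero -/
lemma ug_far (n : ℕ) {a : ℝ} (ha : 0 ≤ a) {x : ℝ} (hx1 : 1 ≤ x) (m : ℕ) (hm : 1 ≤ m)
    {c : ℝ} (hc : c = Real.exp (-1) / ((n + 1).factorial : ℝ)) :
    |Real.exp (-a * x) * ugQ n x ^ m - Real.exp (-(m / ((n + 1).factorial : ℝ)) * x ^ (n + 1))|
      ≤ Real.exp c * Real.exp (-(c * m)) * (2 ^ (n + 1) * Real.exp (-(1 / 2) * x) +
          Real.exp (-(1 / ((n + 1).factorial : ℝ)) * x ^ (n + 1))) := by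
  have hx : 0 ≤ x := by linarith
  obtain ⟨p, rfl⟩ : ∃ p, m = p + 1 := ⟨m - 1, by omega⟩
  set B := Real.exp (-(1 / ((n + 1).factorial : ℝ)) * x ^ (n + 1)) with hB
  have hBm : Real.exp (-(((p + 1 : ℕ) : ℝ) / ((n + 1).factorial : ℝ)) * x ^ (n + 1)) = B ^ (p + 1) := by
    rw [hB, ← Real.exp_nat_mul]; congr 1; ring
  have hEm : Real.exp c * Real.exp (-(c * ((p + 1 : ℕ) : ℝ))) = Real.exp (-c) ^ p := by
    rw [← Real.exp_nat_mul, ← Real.exp_add]; congr 1; push_cast; ring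
  rw [hBm, hEm]
  have hG0 := ugQ_nonneg n hx
  have hGc : ugQ n x ≤ Real.exp (-c) := by
    have h1 := ugQ_anti n zero_le_one hx1
    have h2 := ugQ_upper n (zero_le_one)
    have h3 := Real.add_one_le_exp (-c)
    have h4 : Real.exp (-1) * (1 ^ (n + 1) / ((n + 1).factorial : ℝ)) = c := by rw [hc]; simp; ring
    linarith
  have hB0 : 0 < B := Real.exp_pos _
  have hBc : B ≤ Real.exp (-c) := by
    apply Real.exp_le_exp.2
    have h1 : (1:ℝ) ≤ x ^ (n + 1) := one_le_pow₀ hx1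
    have h2 : c ≤ 1 / ((n + 1).factorial : ℝ) := by
      rw [hc]; gcongr; exact Real.exp_le_one_iff.2 (by norm_num)
    have h3 : 0 ≤ 1 / ((n + 1).factorial : ℝ) := by positivity
    nlinarith
  have hdec := ugQ_decay n hx
  have he : Real.exp (-a * x) ≤ 1 := Real.exp_le_one_iff.2 (by nlinarith)
  have hA : Real.exp (-a * x) * ugQ n x ^ (p + 1) ≤ Real.exp (-c) ^ p * (2 ^ (n + 1) * Real.exp (-(1 / 2) * x)) := by
    calc _ ≤ 1 * (ugQ n x ^ p * ugQ n x) := by rw [← pow_succ]; gcongr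
      _ = ugQ n x ^ p * ugQ n x := one_mul _
      _ ≤ _ := by gcongr
  have hA0 : 0 ≤ Real.exp (-a * x) * ugQ n x ^ (p + 1) := by positivity
  have hBB : B ^ (p + 1) ≤ Real.exp (-c) ^ p * B := by
    rw [pow_succ]; gcongr
  have hBB0 : 0 ≤ B ^ (p + 1) := by positivity
  rw [mul_add, abs_le]
  constructor <;> linarith

lemma ug_exp_bound {c : ℝ} (hc : 0 < c) (s : ℝ) :
    ∃ M : ℝ, 0 ≤ M ∧ ∀ m : ℕ, 1 ≤ m → Real.exp (-(c * m)) ≤ M * (m : ℝ) ^ (-s) := by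
  obtain ⟨N, hN⟩ := exists_nat_ge s
  refine ⟨N.factorial / c ^ N, by positivity, fun m hm => ?_⟩
  have hm0 : (0:ℝ) < m := by exact_mod_cast hm
  have hm1 : (1:ℝ) ≤ m := by exact_mod_cast hm
  have h := Real.pow_div_factorial_le_exp (c * m) (by positivity) N
  have h2 : (m:ℝ) ^ s ≤ (m:ℝ) ^ N := by
    rw [← Real.rpow_natCast]; exact Real.rpow_le_rpow_of_exponent_le hm1 hN
  have hs : 0 < (m:ℝ) ^ s := Real.rpow_pos_of_pos hm0 s
  rw [Real.rpow_neg hm0.le, Real.exp_neg, ← div_eq_mul_inv, div_div,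
    inv_le_comm₀ (Real.exp_pos _) (by positivity), inv_div, ]
  refine le_trans ?_ h
  rw [mul_pow]
  gcongr

lemma ug_main (n : ℕ) (a b : ℝ) (ha : 0 ≤ a) (hb : 1 ≤ b) :
    ∃ K : ℝ, 0 ≤ K ∧ ∀ m : ℕ, 1 ≤ m →
      |(∫ x in Ioi (0 : ℝ), x ^ (b - 1) * Real.exp (-a * x) * ugQ n x ^ m)
        - ((n + 1).factorial : ℝ) ^ (b / ((n + 1 : ℕ) : ℝ)) * Real.Gamma (b / ((n + 1 : ℕ) : ℝ))
          / ((n + 1 : ℕ) : ℝ) * (m : ℝ) ^ (-(b / ((n + 1 : ℕ) : ℝ)))|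
        ≤ K * (m : ℝ) ^ (-((b + 1) / ((n + 1 : ℕ) : ℝ))) := by
  set k : ℝ := ((n + 1 : ℕ) : ℝ) with hk
  have hk0 : 0 < k := by rw [hk]; positivity
  set f : ℝ := ((n + 1).factorial : ℝ) with hf
  have hf0 : 0 < f := by rw [hf]; positivity
  obtain ⟨c, hc⟩ : ∃ c, c = Real.exp (-1) / f := ⟨_, rfl⟩
  have hc0 : 0 < c := by rw [hc]; positivity
  obtain ⟨M, hM0, hM⟩ := ug_exp_bound hc0 ((b + 1) / k)
  have iT1 : IntegrableOn (fun x : ℝ => x ^ (b - 1) * Real.exp (-(1 / 2) * x)) (Ioi 0) := by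
    have := integrableOn_rpow_mul_exp_neg_mul_rpow (p := 1) (s := b - 1) (b := 1 / 2)
      (by linarith) one_pos (by norm_num)
    simpa only [Real.rpow_one] using this
  have iT2 : IntegrableOn (fun x : ℝ => x ^ (b - 1) * Real.exp (-(1 / f) * x ^ k)) (Ioi 0) :=
    integrableOn_rpow_mul_exp_neg_mul_rpow (by linarith) hk0 (by positivity)
  set T : ℝ → ℝ := fun x => 2 ^ (n + 1) * (x ^ (b - 1) * Real.exp (-(1 / 2) * x))
      + x ^ (b - 1) * Real.exp (-(1 / f) * x ^ k) with hT
  have iT : IntegrableOn T (Ioi 0) := (iT1.const_mul _).add iT2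
  have hT0 : 0 ≤ ∫ x in Ioi (0:ℝ), T x := by
    refine setIntegral_nonneg measurableSet_Ioi fun x hx => ?_
    have hx0 : (0:ℝ) < x := hx
    simp only [hT]; positivity
  set G1 := (1 / k) * Real.Gamma ((b + 1) / k) with hG1
  set G2 := (1 / k) * Real.Gamma ((b + k + 1) / k) with hG2
  have hG1p : 0 ≤ G1 := mul_nonneg (by positivity) (Real.Gamma_pos_of_pos (by positivity)).le
  have hG2p : 0 ≤ G2 := mul_nonneg (by positivity) (Real.Gamma_pos_of_pos (by positivity)).le
  refine ⟨a * (c ^ (-(b + 1) / k) * G1) + Real.exp c * (c ^ (-(b + k + 1) / k) * G2)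
      + Real.exp c * M * ∫ x in Ioi (0:ℝ), T x, by positivity, fun m hm => ?_⟩
  have hm0 : (0:ℝ) < m := by exact_mod_cast hm
  have hcm : 0 < c * m := by positivity
  -- the main term
  have hmain : ∫ x in Ioi (0:ℝ), x ^ (b - 1) * Real.exp (-(m / f) * x ^ k)
      = f ^ (b / k) * Real.Gamma (b / k) / k * (m : ℝ) ^ (-(b / k)) := by
    rw [integral_rpow_mul_exp_neg_mul_rpow hk0 (by linarith) (by positivity), sub_add_cancel,
      neg_div, Real.div_rpow hm0.le hf0.le, Real.rpow_neg hf0.le (b / k), div_inv_eq_mul]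
    ring
  have imain : IntegrableOn (fun x : ℝ => x ^ (b - 1) * Real.exp (-(m / f) * x ^ k)) (Ioi 0) :=
    integrableOn_rpow_mul_exp_neg_mul_rpow (by linarith) hk0 (by positivity)
  have iF : IntegrableOn (fun x : ℝ => x ^ (b - 1) * Real.exp (-a * x) * ugQ n x ^ m) (Ioi 0) := by
    refine Integrable.mono' (iT1.const_mul (2 ^ (n + 1))) ?_ ?_
    · refine ContinuousOn.aestronglyMeasurable ?_ measurableSet_Ioi
      refine ContinuousOn.mul (ContinuousOn.mul ?_ (by fun_prop)) ((ugQ_contOn n).pow m)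
      intro x hx
      exact (Real.continuousAt_rpow_const x _ (Or.inl (ne_of_gt hx))).continuousWithinAt
    · refine (ae_restrict_iff' measurableSet_Ioi).2 (Filter.Eventually.of_forall fun x hx => ?_)
      have hx0 : (0:ℝ) < x := hx
      have hG0 := ugQ_nonneg n hx0.le
      have h1 := ugQ_le_one n hx0.le
      have h2 := ugQ_decay n hx0.le
      have he : Real.exp (-a * x) ≤ 1 := Real.exp_le_one_iff.2 (by nlinarith)
      have h3 : ugQ n x ^ m ≤ ugQ n x := pow_le_of_le_one hG0 h1 (by omega)
      rw [Real.norm_of_nonneg (by positivity)]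
      calc _ ≤ x ^ (b - 1) * 1 * (2 ^ (n + 1) * Real.exp (-(1 / 2) * x)) := by
            gcongr; exact h3.trans h2
        _ = _ := by ring
  rw [← hmain, ← integral_sub iF imain]
  have i1 : IntegrableOn (fun x : ℝ => x ^ b * Real.exp (-(c * m) * x ^ k)) (Ioi 0) :=
    integrableOn_rpow_mul_exp_neg_mul_rpow (by linarith) hk0 hcm
  have i2 : IntegrableOn (fun x : ℝ => x ^ (b + k) * Real.exp (-(c * m) * x ^ k)) (Ioi 0) :=
    integrableOn_rpow_mul_exp_neg_mul_rpow (by linarith) hk0 hcm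
  have v1 : ∫ x in Ioi (0:ℝ), x ^ b * Real.exp (-(c * m) * x ^ k)
      = c ^ (-(b + 1) / k) * G1 * (m:ℝ) ^ (-((b + 1) / k)) := by
    rw [integral_rpow_mul_exp_neg_mul_rpow hk0 (by linarith) hcm, Real.mul_rpow hc0.le hm0.le, hG1,
      neg_div]
    ring
  have v2 : m * ∫ x in Ioi (0:ℝ), x ^ (b + k) * Real.exp (-(c * m) * x ^ k)
      = c ^ (-(b + k + 1) / k) * G2 * (m:ℝ) ^ (-((b + 1) / k)) := by
    rw [integral_rpow_mul_exp_neg_mul_rpow hk0 (by linarith) hcm, Real.mul_rpow hc0.le hm0.le, hG2]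
    have : (m:ℝ) ^ (-((b + 1) / k)) = m * (m:ℝ) ^ (-(b + k + 1) / k) := by
      rw [← Real.rpow_one_add' hm0.le]
      · congr 1; field_simp; ring
      · have : 1 + -(b + k + 1) / k = -((b + 1) / k) := by field_simp; ring
        rw [this]
        have : 0 < (b + 1) / k := by positivity
        linarith
    rw [this]; ring
  have key := MeasureTheory.norm_integral_le_of_norm_le (μ := volume.restrict (Ioi (0:ℝ)))
    (f := fun x : ℝ => x ^ (b - 1) * Real.exp (-a * x) * ugQ n x ^ m
      - x ^ (b - 1) * Real.exp (-(m / f) * x ^ k))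
    (g := fun x : ℝ => (a * (x ^ b * Real.exp (-(c * m) * x ^ k))
      + m * Real.exp c * (x ^ (b + k) * Real.exp (-(c * m) * x ^ k)))
      + Real.exp c * Real.exp (-(c * m)) * T x)
    (((i1.const_mul _).add (i2.const_mul _)).add (iT.const_mul _)) ?_
  · rw [Real.norm_eq_abs] at key
    refine key.trans ?_
    have i12 : Integrable (fun x : ℝ => a * (x ^ b * Real.exp (-(c * m) * x ^ k))
      + m * Real.exp c * (x ^ (b + k) * Real.exp (-(c * m) * x ^ k)))
      (volume.restrict (Ioi (0:ℝ))) := (i1.const_mul _).add (i2.const_mul _)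
    rw [integral_add i12 (iT.const_mul _),
      integral_add (i1.const_mul _) (i2.const_mul _), integral_const_mul, integral_const_mul,
      integral_const_mul, v1, mul_comm (m:ℝ) (Real.exp c), mul_assoc (Real.exp c) (m:ℝ), v2]
    have h := hM m hm
    have h2 : Real.exp c * Real.exp (-(c * m)) * ∫ x in Ioi (0:ℝ), T x
        ≤ Real.exp c * (M * (m:ℝ) ^ (-((b + 1) / k))) * ∫ x in Ioi (0:ℝ), T x := by
      gcongr
    refine (add_le_add le_rfl h2).trans (le_of_eq ?_)
    ring
  · refine (ae_restrict_iff' measurableSet_Ioi).2 (Filter.Eventually.of_forall fun x hx => ?_)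
    have hx0 : (0:ℝ) < x := hx
    have hxk : x ^ k = x ^ (n + 1) := by rw [hk, Real.rpow_natCast]
    have hT0x : 0 ≤ T x := by simp only [hT]; positivity
    have hxb : 0 ≤ x ^ (b - 1) := by positivity
    have hxb1 : x ^ b = x ^ (b - 1) * x := by
      rw [← Real.rpow_add_one hx0.ne', sub_add_cancel]
    have hxb2 : x ^ (b + k) = x ^ (b - 1) * x ^ (n + 2) := by
      rw [Real.rpow_add hx0, hxk, hxb1]; ring
    rw [Real.norm_eq_abs, mul_assoc, ← mul_sub, abs_mul, abs_of_nonneg hxb]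
    rcases le_total x 1 with h1 | h1
    · have h := ug_near n ha hx0 h1 m hc
      rw [← hxk] at h
      have h' := mul_le_mul_of_nonneg_left h hxb
      refine h'.trans ?_
      have : 0 ≤ Real.exp c * Real.exp (-(c * m)) * T x := by positivity
      rw [hxb1, hxb2]
      linarith
    · have h := ug_far n ha h1 m hm hc
      rw [← hxk] at h
      have h' := mul_le_mul_of_nonneg_left h hxb
      refine h'.trans ?_
      have h3 : 0 ≤ a * (x ^ b * Real.exp (-(c * m) * x ^ k))
        + m * Real.exp c * (x ^ (b + k) * Real.exp (-(c * m) * x ^ k)) := by positivity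
      refine le_trans (le_of_eq ?_) (le_add_of_nonneg_left h3)
      simp only [hT, hf]
      ring

theorem stmt1 (k : ℕ) (hk : 1 ≤ k) (a b : ℝ) (ha : 0 ≤ a) (hb : 1 ≤ b) :
    ∃ C : ℝ, ∀ m : ℕ, 1 ≤ m →
      |(∫ x in Set.Ioi (0 : ℝ),
            x ^ (b - 1) * Real.exp (-a * x) * (upperGamma k x / (Nat.factorial (k - 1) : ℝ)) ^ m)
          - (Nat.factorial k : ℝ) ^ (b / k) * Real.Gamma (b / k) / k * (m : ℝ) ^ (-(b / k))|
        ≤ C * (m : ℝ) ^ (-(1 / (2 * (k : ℝ)))) *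
            ((Nat.factorial k : ℝ) ^ (b / k) * Real.Gamma (b / k) / k * (m : ℝ) ^ (-(b / k))) := by
  obtain ⟨n, rfl⟩ : ∃ n, k = n + 1 := ⟨k - 1, by omega⟩
  obtain ⟨K, hK0, hK⟩ := ug_main n a b ha hb
  have hk0 : (0:ℝ) < ((n + 1 : ℕ) : ℝ) := by positivity
  set A : ℝ := ((n + 1).factorial : ℝ) ^ (b / ((n + 1 : ℕ) : ℝ))
    * Real.Gamma (b / ((n + 1 : ℕ) : ℝ)) / ((n + 1 : ℕ) : ℝ) with hA
  have hA0 : 0 < A := by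
    have := Real.Gamma_pos_of_pos (s := b / ((n + 1 : ℕ) : ℝ)) (by positivity)
    rw [hA]; positivity
  refine ⟨K / A, fun m hm => ?_⟩
  have hm1 : (1:ℝ) ≤ m := by exact_mod_cast hm
  have hm0 : (0:ℝ) < m := by linarith
  refine (hK m hm).trans ?_
  have h1 : (m : ℝ) ^ (-((b + 1) / ((n + 1 : ℕ) : ℝ)))
      ≤ (m : ℝ) ^ (-(1 / (2 * ((n + 1 : ℕ) : ℝ)))) * (m : ℝ) ^ (-(b / ((n + 1 : ℕ) : ℝ))) := by
    rw [← Real.rpow_add hm0]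
    apply Real.rpow_le_rpow_of_exponent_le hm1
    have : 0 < 1 / ((n + 1 : ℕ) : ℝ) := by positivity
    have e1 : (b + 1) / ((n + 1 : ℕ) : ℝ)
      = b / ((n + 1 : ℕ) : ℝ) + 1 / ((n + 1 : ℕ) : ℝ) := by ring
    have e2 : 1 / (2 * ((n + 1 : ℕ) : ℝ)) = 1 / 2 * (1 / ((n + 1 : ℕ) : ℝ)) := by
      field_simp
    rw [e1, e2]; linarith
  calc _ ≤ K * ((m : ℝ) ^ (-(1 / (2 * ((n + 1 : ℕ) : ℝ)))) * (m : ℝ) ^ (-(b / ((n + 1 : ℕ) : ℝ)))) := by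
        gcongr
    _ = _ := by field_simp
end

section
/- For a > 0, b > 0 and integer k ≥ 2, the double integral ξ_k(a,b) := ∫_0^∞ ∫_y^∞ exp(-a x^k/k! - b y^k/k!) dx dy equals (Γ(2/k)/k) (k!/a)^{2/k} · F(2/k, 1/k; 1 + 1/k; -b/a), where F denotes the Gauss hypergeometric function. -/
open MeasureTheory Real Set

/-- The Gauss hypergeometric function `₂F₁(a, b; c; z)`, given (for `c > b > 0` and `z < 1`)
by Euler's integral representation. -/
noncomputable def hypF (a b c z : ℝ) : ℝ :=
  (Real.Gamma c / (Real.Gamma b * Real.Gamma (c - b))) *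
    ∫ t in Set.Ioo (0 : ℝ) 1, t ^ (b - 1) * (1 - t) ^ (c - b - 1) * (1 - z * t) ^ (-a)

lemma hyp_eq (k : ℕ) (hk : 2 ≤ k) (a b : ℝ) (ha : 0 < a) (hb : 0 < b) :
    hypF (2 / k) (1 / k) (1 + 1 / k) (-b / a) =
      ∫ t in Set.Ioi (1 : ℝ), (t ^ k + b / a) ^ (-((2 : ℝ) / k)) := by
  have hk0 : (0 : ℝ) < k := by positivity
  have hG : Real.Gamma (1 / (k:ℝ)) ≠ 0 := (Real.Gamma_pos_of_pos (by positivity)).ne'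
  unfold hypF
  have e1 : (1 + 1 / (k:ℝ) - 1 / k) = 1 := by ring
  rw [e1, add_comm (1:ℝ) (1 / k), Real.Gamma_add_one (by positivity), Real.Gamma_one]
  set h : ℝ → ℝ := fun t => t ^ (1 / (k:ℝ) - 1) * (1 - t) ^ ((1:ℝ) - 1) * (1 - -b / a * t) ^ (-(2 / (k:ℝ))) with hh
  have e2 : ∫ t in Set.Ioo (0:ℝ) 1, h t = ∫ t in Set.Ioi (0:ℝ), (Set.Iio (1:ℝ)).indicator h t := by
    rw [MeasureTheory.setIntegral_indicator measurableSet_Iio, Set.Ioi_inter_Iio]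
  rw [e2, ← MeasureTheory.integral_comp_rpow_Ioi _ (p := -(k:ℝ)) (by linarith)]
  have e3 : ∫ t in Set.Ioi (1 : ℝ), (t ^ k + b / a) ^ (-((2 : ℝ) / k)) =
      ∫ t in Set.Ioi (0:ℝ), (Set.Ioi (1:ℝ)).indicator (fun t => (t ^ k + b / a) ^ (-((2 : ℝ) / k))) t := by
    rw [MeasureTheory.setIntegral_indicator measurableSet_Ioi, Set.Ioi_inter_Ioi]
    simp
  rw [e3, ← MeasureTheory.integral_const_mul]
  apply MeasureTheory.setIntegral_congr_fun measurableSet_Ioi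
  intro t ht
  have ht : 0 < t := ht
  dsimp only
  have hmem : t ^ (-(k:ℝ)) ∈ Set.Iio (1:ℝ) ↔ t ∈ Set.Ioi (1:ℝ) := by
    simp only [Set.mem_Iio, Set.mem_Ioi]
    rw [Real.rpow_lt_one_iff_of_pos ht]
    constructor
    · rintro (h | h)
      · exact h.1
      · linarith [h.2]
    · intro h; left; exact ⟨h, by linarith⟩
  by_cases h1 : t ∈ Set.Ioi (1:ℝ)
  · rw [Set.indicator_of_mem h1, Set.indicator_of_mem (hmem.2 h1), hh]
    have hp : (0:ℝ) < t ^ k + b / a := by positivity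
    have f1 : 1 - -b / a * t ^ (-(k:ℝ)) = t ^ (-(k:ℝ)) * (t ^ k + b / a) := by
      rw [mul_add, ← Real.rpow_natCast t k, ← Real.rpow_add ht]
      simp; ring
    simp only [smul_eq_mul]
    rw [f1, Real.mul_rpow (by positivity) hp.le, ← Real.rpow_mul ht.le, ← Real.rpow_mul ht.le]
    have f2 : t ^ (-(k:ℝ) - 1) * (t ^ (-(k:ℝ) * (1 / (k:ℝ) - 1)) * t ^ (-(k:ℝ) * -(2 / (k:ℝ)))) = 1 := by
      rw [← Real.rpow_add ht, ← Real.rpow_add ht]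
      have : (-(k:ℝ) - 1 + (-(k:ℝ) * (1 / (k:ℝ) - 1) + -(k:ℝ) * -(2 / (k:ℝ)))) = 0 := by
        field_simp; ring
      rw [this, Real.rpow_zero]
    rw [sub_self, Real.rpow_zero, abs_neg, abs_of_pos hk0]
    generalize (t ^ k + b / a) ^ (-(2 / (k:ℝ))) = Z at *
    generalize t ^ (-(k:ℝ) - 1) = A at *
    generalize t ^ (-(k:ℝ) * (1 / (k:ℝ) - 1)) = B at *
    generalize t ^ (-(k:ℝ) * -(2 / (k:ℝ))) = C at *
    field_simp
    linear_combination Z * f2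
  · rw [Set.indicator_of_notMem h1, Set.indicator_of_notMem (fun h => h1 (hmem.1 h))]
    simp

lemma slice (k : ℕ) (hk : 2 ≤ k) (c : ℝ) (hc : 0 < c) :
    IntegrableOn (fun y : ℝ => y * Real.exp (-c * y ^ k)) (Set.Ioi 0) ∧
    ∫ y in Set.Ioi (0:ℝ), y * Real.exp (-c * y ^ k) =
      c ^ (-((2:ℝ) / k)) * (1 / k) * Real.Gamma (2 / k) := by
  have hk1 : (1 : ℝ) ≤ k := by exact_mod_cast (by omega : 1 ≤ k)
  have A := integrableOn_rpow_mul_exp_neg_mul_rpow (s := 1) (p := k) (b := c) (by norm_num) (by linarith) hc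
  have B := integral_rpow_mul_exp_neg_mul_rpow (p := k) (q := 1) (b := c) (by linarith) (by norm_num) hc
  simp only [Real.rpow_one, Real.rpow_natCast] at A B
  refine ⟨A, B.trans ?_⟩
  norm_num [neg_div]

theorem stmt2 (k : ℕ) (hk : 2 ≤ k) (a b : ℝ) (ha : 0 < a) (hb : 0 < b) :
    (∫ y in Set.Ioi (0 : ℝ), ∫ x in Set.Ioi y,
        Real.exp (-a * x ^ k / (Nat.factorial k : ℝ) - b * y ^ k / (Nat.factorial k : ℝ)))
      = Real.Gamma (2 / k) / k * ((Nat.factorial k : ℝ) / a) ^ ((2 : ℝ) / k) *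
          hypF (2 / k) (1 / k) (1 + 1 / k) (-b / a) := by
  rw [hyp_eq k hk a b ha hb]
  have hk0 : (0 : ℝ) < k := by positivity
  have hN : (0:ℝ) < (Nat.factorial k : ℝ) := by positivity
  generalize (Nat.factorial k : ℝ) = N at *
  set F : ℝ → ℝ → ℝ := fun y t => y * Real.exp (-((a * t ^ k + b) / N) * y ^ k) with hF
  have hc : ∀ t ∈ Set.Ioi (1:ℝ), 0 < (a * t ^ k + b) / N := by
    intro t ht
    have : (0:ℝ) < t := lt_trans one_pos ht
    positivity
  have hval : ∀ t ∈ Set.Ioi (1:ℝ), ∫ y in Set.Ioi (0:ℝ), F y t =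
      Real.Gamma (2 / k) / k * (N / a) ^ ((2 : ℝ) / k) * (t ^ k + b / a) ^ (-((2 : ℝ) / k)) := by
    intro t ht
    have h0 : (0:ℝ) < t := lt_trans one_pos ht
    rw [(slice k hk _ (hc t ht)).2]
    have : (a * t ^ k + b) / N = (N / a)⁻¹ * (t ^ k + b / a) := by field_simp
    rw [this, Real.mul_rpow (by positivity) (by positivity), Real.inv_rpow (by positivity),
      Real.rpow_neg (x := N / a) (by positivity), inv_inv]
    ring
  have hint2 : IntegrableOn (fun t : ℝ => (t ^ k + b / a) ^ (-((2 : ℝ) / k))) (Set.Ioi 1) := by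
    refine (integrableOn_Ioi_rpow_of_lt (a := -2) (by norm_num) (c := 1) one_pos).mono' ?_ ?_
    · apply Measurable.aestronglyMeasurable
      fun_prop
    · refine (ae_restrict_mem measurableSet_Ioi).mono fun t ht => ?_
      have h0 : (0:ℝ) < t := lt_trans one_pos ht
      rw [Real.norm_of_nonneg (by positivity)]
      calc (t ^ k + b / a) ^ (-((2 : ℝ) / k)) ≤ (t ^ k) ^ (-((2 : ℝ) / k)) := by
            apply Real.rpow_le_rpow_of_nonpos (by positivity)
            · have : 0 < b / a := by positivity
              linarith
            · have : 0 < 2 / (k:ℝ) := by positivity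
              linarith
        _ = t ^ (-2:ℝ) := by
            rw [← Real.rpow_natCast, ← Real.rpow_mul h0.le]
            congr 1
            field_simp
  have hprod : Integrable (Function.uncurry F)
      ((volume.restrict (Set.Ioi (0:ℝ))).prod (volume.restrict (Set.Ioi (1:ℝ)))) := by
    rw [MeasureTheory.integrable_prod_iff']
    · constructor
      · exact (ae_restrict_mem measurableSet_Ioi).mono fun t ht => (slice k hk _ (hc t ht)).1
      · refine (hint2.const_mul (Real.Gamma (2 / k) / k * (N / a) ^ ((2 : ℝ) / k))).congr ?_
        refine (ae_restrict_mem measurableSet_Ioi).mono fun t ht => ?_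
        dsimp only
        rw [← hval t ht]
        apply MeasureTheory.setIntegral_congr_fun measurableSet_Ioi
        intro y hy
        have hy : 0 < y := hy
        simp only [Function.uncurry, hF]
        rw [Real.norm_of_nonneg (by positivity)]
    · apply Continuous.aestronglyMeasurable
      simp only [hF, Function.uncurry_def]
      fun_prop
  have hinner : ∀ y ∈ Set.Ioi (0:ℝ), ∫ x in Set.Ioi y, Real.exp (-a * x ^ k / N - b * y ^ k / N)
      = ∫ t in Set.Ioi (1:ℝ), F y t := by
    intro y hy
    have hy : 0 < y := hy
    have := MeasureTheory.integral_comp_mul_left_Ioi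
      (fun x => Real.exp (-a * x ^ k / N - b * y ^ k / N)) 1 hy
    rw [mul_one, smul_eq_mul] at this
    simp only [hF]
    rw [MeasureTheory.integral_const_mul]
    have e : ∀ t : ℝ, -((a * t ^ k + b) / N) * y ^ k = -a * (y * t) ^ k / N - b * y ^ k / N := by
      intro t; rw [mul_pow]; ring
    simp only [e]
    rw [this, mul_inv_cancel_left₀ hy.ne']
  rw [MeasureTheory.setIntegral_congr_fun measurableSet_Ioi hinner,
    MeasureTheory.integral_integral_swap hprod,
    MeasureTheory.setIntegral_congr_fun measurableSet_Ioi hval,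
    MeasureTheory.integral_const_mul]
end

section
/- For every integer k ≥ 3, ∫_0^1 s^{-2/k} ∫_0^{1-s} F(2/k, 1/k; 1 + 1/k; -t/s) dt ds = k π cot(π/k) / (2(k-2)(k-1)). -/
open MeasureTheory Real Set

/-- Mittag-Leffler expansion of the cotangent, regrouped. -/
lemma aux_hasSum_cot (a : ℝ) (ha : 0 < a) (ha2 : a < 1 / 2) :
    HasSum (fun n : ℕ => 1 / ((n : ℝ) + a) - 1 / ((n : ℝ) + 1 - a)) (π * Real.cot (π * a)) := by
  have hnn : ∀ n : ℕ, 0 ≤ 1 / ((n : ℝ) + a) - 1 / ((n : ℝ) + 1 - a) := by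
    intro n
    have hn : (0 : ℝ) ≤ n := n.cast_nonneg
    rw [sub_nonneg]
    apply one_div_le_one_div_of_le <;> linarith
  rw [hasSum_iff_tendsto_nat_of_nonneg hnn]
  have hx : (a : ℂ) ∈ Complex.integerComplement := by
    rintro ⟨m, hm⟩
    have hm' : (m : ℝ) = a := by exact_mod_cast hm
    have h1 : (0 : ℝ) < m := by rw [hm']; exact ha
    have h2 : (m : ℝ) < 1 := by rw [hm']; linarith
    have h1' : 0 < m := by exact_mod_cast h1
    have h2' : m < 1 := by exact_mod_cast h2
    omega
  have h := tendsto_logDeriv_euler_cot_sub hx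
  have hre := (Complex.continuous_re.tendsto _).comp h
  have hval : ((π : ℂ) * Complex.cot (π * (a : ℂ)) - 1 / (a : ℂ)).re
      = π * Real.cot (π * a) - 1 / a := by
    rw [← Complex.ofReal_re (π * Real.cot (π * a) - 1 / a)]
    push_cast [Complex.ofReal_cot]
    rfl
  rw [hval] at hre
  have hsum : ∀ n : ℕ, (∑ j ∈ Finset.range n, cotTerm (a : ℂ) j).re
      = ∑ j ∈ Finset.range n, (1 / (a - (j + 1)) + 1 / (a + (j + 1))) := by
    intro n
    rw [← Complex.ofReal_re (∑ j ∈ Finset.range n, (1 / (a - (j + 1)) + 1 / (a + (j + 1))))]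
    push_cast
    rfl
  have hz : Filter.Tendsto (fun n : ℕ => 1 / ((n : ℝ) + a)) Filter.atTop (nhds 0) := by
    have := (Filter.tendsto_atTop_add_const_right Filter.atTop a
      (tendsto_natCast_atTop_atTop (R := ℝ)))
    simp_rw [one_div]
    exact this.inv_tendsto_atTop
  have key : ∀ n : ℕ, ∑ j ∈ Finset.range n, (1 / ((j : ℝ) + a) - 1 / ((j : ℝ) + 1 - a))
      = (∑ j ∈ Finset.range n, (1 / (a - (j + 1)) + 1 / (a + (j + 1)))) + 1 / a
        - 1 / ((n : ℝ) + a) := by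
    intro n
    induction n with
    | zero => simp
    | succ n ih =>
      rw [Finset.sum_range_succ, Finset.sum_range_succ, ih]
      have e : 1 / (a - ((n : ℝ) + 1)) = - (1 / ((n : ℝ) + 1 - a)) := by
        rw [← neg_sub, one_div, one_div, inv_neg]
      rw [e]
      push_cast
      rw [add_comm a ((n : ℝ) + 1)]
      ring
  simp_rw [key]
  have h3 : Filter.Tendsto (fun n : ℕ =>
      ∑ j ∈ Finset.range n, (1 / (a - ((j : ℝ) + 1)) + 1 / (a + (j + 1)))) Filter.atTop
      (nhds (π * Real.cot (π * a) - 1 / a)) :=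
    hre.congr (fun n => hsum n)
  have := (h3.add_const (1 / a)).sub hz
  simpa using this

lemma aux_int_rpow (r : ℝ) (hr : -1 < r) :
    IntegrableOn (fun u : ℝ => u ^ r) (Ioo 0 1) ∧ ∫ u in Ioo (0 : ℝ) 1, u ^ r = 1 / (r + 1) := by
  constructor
  · exact (intervalIntegrable_iff_integrableOn_Ioo_of_le zero_le_one).1
      (intervalIntegral.intervalIntegrable_rpow' hr)
  · rw [← integral_Ioc_eq_integral_Ioo, ← intervalIntegral.integral_of_le zero_le_one,
      integral_rpow (Or.inl hr)]
    rw [Real.zero_rpow (by linarith)]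
    simp

lemma aux_integral_cot (a : ℝ) (ha : 0 < a) (ha2 : a < 1 / 2) :
    ∫ u in Ioo (0 : ℝ) 1, (u ^ (a - 1) - u ^ (-a)) / (1 - u) = π * Real.cot (π * a) := by
  set F : ℕ → ℝ → ℝ := fun n u => u ^ ((n : ℝ) + a - 1) - u ^ ((n : ℝ) - a) with hF
  have hn : ∀ n : ℕ, (0 : ℝ) ≤ n := fun n => n.cast_nonneg
  have i1 : ∀ n : ℕ, -1 < (n : ℝ) + a - 1 := fun n => by linarith [hn n]
  have i2 : ∀ n : ℕ, -1 < (n : ℝ) - a := fun n => by linarith [hn n]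
  have hFi : ∀ n, Integrable (F n) (volume.restrict (Ioo 0 1)) := fun n =>
    (aux_int_rpow _ (i1 n)).1.sub (aux_int_rpow _ (i2 n)).1
  have hFv : ∀ n, ∫ u in Ioo (0 : ℝ) 1, F n u = 1 / ((n : ℝ) + a) - 1 / ((n : ℝ) + 1 - a) := by
    intro n
    rw [hF]
    simp only
    rw [integral_sub (aux_int_rpow _ (i1 n)).1 (aux_int_rpow _ (i2 n)).1,
      (aux_int_rpow _ (i1 n)).2, (aux_int_rpow _ (i2 n)).2]
    congr 2 <;> ring
  have hnorm : ∀ n, ∫ u in Ioo (0 : ℝ) 1, ‖F n u‖ = ∫ u in Ioo (0 : ℝ) 1, F n u := by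
    intro n
    refine setIntegral_congr_fun measurableSet_Ioo fun u hu => ?_
    rw [Real.norm_of_nonneg]
    exact sub_nonneg.2 (Real.rpow_le_rpow_of_exponent_ge hu.1 hu.2.le (by linarith))
  have hs := hasSum_integral_of_summable_integral_norm hFi (by
    simp_rw [hnorm, hFv]
    exact (aux_hasSum_cot a ha ha2).summable)
  simp_rw [hFv] at hs
  rw [← hs.unique (aux_hasSum_cot a ha ha2)]
  refine setIntegral_congr_fun measurableSet_Ioo fun u hu => ?_
  have : ∀ n : ℕ, F n u = (u ^ (a - 1) - u ^ (-a)) * u ^ n := by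
    intro n
    have e1 : (n : ℝ) + a - 1 = (a - 1) + n := by ring
    have e2 : (n : ℝ) - a = (-a) + n := by ring
    simp only [hF]
    rw [e1, e2, Real.rpow_add_natCast hu.1.ne', Real.rpow_add_natCast hu.1.ne']
    ring
  simp_rw [this]
  rw [tsum_mul_left, tsum_geometric_of_lt_one hu.1.le hu.2, div_eq_mul_inv]

/-- Affine power integral. -/
lemma aux_affine (r c d l : ℝ) (hr : -1 < r) (hc : c ≠ 0) (hl : 0 ≤ l) :
    ∫ x in Ioo (0 : ℝ) l, (d + c * x) ^ r
      = ((d + c * l) ^ (r + 1) - d ^ (r + 1)) / (c * (r + 1)) := by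
  rw [← integral_Ioc_eq_integral_Ioo, ← intervalIntegral.integral_of_le hl,
    intervalIntegral.integral_comp_add_mul (fun x => x ^ r) hc, integral_rpow (Or.inl hr)]
  have : r + 1 ≠ 0 := by linarith
  simp only [smul_eq_mul, mul_zero, add_zero]
  field_simp

lemma aux_hypF (a s t : ℝ) (ha : 0 < a) (hs : 0 < s) (ht : 0 < t) :
    s ^ (-(2 * a)) * hypF (2 * a) a (1 + a) (-t / s)
      = ∫ u in Ioo (0 : ℝ) 1, a * (u ^ (a - 1) * (s + u * t) ^ (-(2 * a))) := by
  unfold hypF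
  have e : (1 : ℝ) + a - a = 1 := by ring
  rw [e, Real.Gamma_one, add_comm 1 a, Real.Gamma_add_one ha.ne', mul_one,
    mul_div_cancel_right₀ _ (Real.Gamma_pos_of_pos ha).ne', ← integral_const_mul,
    ← integral_const_mul]
  refine setIntegral_congr_fun measurableSet_Ioo fun u hu => ?_
  simp only [sub_self, Real.rpow_zero, mul_one]
  have hpos : 0 < 1 - -t / s * u := by
    have : 0 < t / s * u := mul_pos (div_pos ht hs) hu.1
    rw [neg_div]; linarith
  have e2 : s + u * t = s * (1 - -t / s * u) := by field_simp; ring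
  rw [e2, Real.mul_rpow hs.le hpos.le]
  ring

lemma aux_bound (a s t u : ℝ) (ha : 0 < a) (hs : 0 < s) (ht : 0 < t) (hu : 0 < u) :
    ‖u ^ (a - 1) * (s + u * t) ^ (-(2 * a))‖ ≤ s ^ (-(2 * a)) * u ^ (a - 1) := by
  have hut := mul_pos hu ht
  rw [Real.norm_of_nonneg (by positivity), mul_comm]
  exact mul_le_mul_of_nonneg_right
    (Real.rpow_le_rpow_of_nonpos hs (by linarith) (by linarith)) (by positivity)

/-- The `t`-integral. -/
noncomputable def auxG (a s u : ℝ) : ℝ :=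
  u ^ (a - 1) * (((s + u * (1 - s)) ^ (1 - 2 * a) - s ^ (1 - 2 * a)) / (u * (1 - 2 * a)))

lemma auxG_eq (a s u : ℝ) (ha2 : a < 1 / 2) (hs : s < 1) (hu : 0 < u) :
    ∫ t in Ioo (0 : ℝ) (1 - s), u ^ (a - 1) * (s + u * t) ^ (-(2 * a)) = auxG a s u := by
  rw [integral_const_mul, aux_affine _ _ _ _ (by linarith) hu.ne' (by linarith), auxG]
  have e : -(2 * a) + 1 = 1 - 2 * a := by ring
  rw [e]

lemma auxG_bound (a s u : ℝ) (ha : 0 < a) (ha2 : a < 1 / 2) (hs0 : 0 < s) (hs : s < 1)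
    (hu : 0 < u) : ‖auxG a s u‖ ≤ s ^ (-(2 * a)) * u ^ (a - 1) := by
  rw [← auxG_eq a s u ha2 hs hu]
  have h := norm_setIntegral_le_of_norm_le_const (μ := volume) (s := Ioo (0 : ℝ) (1 - s))
    (f := fun t => u ^ (a - 1) * (s + u * t) ^ (-(2 * a))) (by simp)
    (fun t ht => aux_bound a s t u ha hs0 ht.1 hu)
  refine h.trans ?_
  have : volume.real (Ioo (0 : ℝ) (1 - s)) ≤ 1 := by
    rw [Real.volume_real_Ioo_of_le (by linarith)]; linarith
  have h0 : 0 ≤ s ^ (-(2 * a)) * u ^ (a - 1) := by positivity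
  nlinarith

lemma aux_swap1 (a s : ℝ) (ha : 0 < a) (ha2 : a < 1 / 2) (hs0 : 0 < s) (hs : s < 1) :
    s ^ (-(2 * a)) * ∫ t in Ioo (0 : ℝ) (1 - s), hypF (2 * a) a (1 + a) (-t / s)
      = ∫ u in Ioo (0 : ℝ) 1, a * auxG a s u := by
  rw [← integral_const_mul]
  rw [setIntegral_congr_fun measurableSet_Ioo (fun t ht => aux_hypF a s t ha hs0 ht.1)]
  rw [integral_integral_swap]
  · refine setIntegral_congr_fun measurableSet_Ioo fun u hu => ?_
    rw [integral_const_mul, auxG_eq a s u ha2 hs hu.1]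
  · have hi : Integrable (fun z : ℝ × ℝ => (fun _ : ℝ => s ^ (-(2 * a))) z.1 *
        (fun u : ℝ => u ^ (a - 1)) z.2)
        ((volume.restrict (Ioo (0 : ℝ) (1 - s))).prod (volume.restrict (Ioo (0 : ℝ) 1))) :=
      Integrable.mul_prod (integrable_const _) (aux_int_rpow _ (by linarith)).1
    have hm : AEStronglyMeasurable (fun z : ℝ × ℝ => z.2 ^ (a - 1) * (s + z.2 * z.1) ^ (-(2 * a)))
        ((volume.restrict (Ioo (0 : ℝ) (1 - s))).prod (volume.restrict (Ioo (0 : ℝ) 1))) :=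
      Measurable.aestronglyMeasurable (by fun_prop)
    refine (hi.mono' hm ?_).const_mul a
    rw [Measure.prod_restrict]
    filter_upwards [ae_restrict_mem (measurableSet_Ioo.prod measurableSet_Ioo)] with z hz
    exact aux_bound a s z.1 z.2 ha hs0 hz.1.1 hz.2.1

lemma aux_sint (a u : ℝ) (ha : 0 < a) (ha2 : a < 1 / 2) (hu : 0 < u) (hu1 : u < 1) :
    ∫ s in Ioo (0 : ℝ) 1, auxG a s u
      = 1 / ((1 - 2 * a) * (2 - 2 * a)) * ((u ^ (a - 1) - u ^ (-a)) / (1 - u)) := by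
  unfold auxG
  rw [integral_const_mul, integral_div, integral_sub]
  · have e : ∀ s : ℝ, s + u * (1 - s) = u + (1 - u) * s := fun s => by ring
    simp_rw [e]
    rw [aux_affine _ _ _ _ (by linarith) (by linarith) zero_le_one,
      (aux_int_rpow (1 - 2 * a) (by linarith)).2]
    have e1 : (1 : ℝ) - 2 * a + 1 = 2 - 2 * a := by ring
    have e2 : u + (1 - u) * 1 = 1 := by ring
    rw [e1, e2, Real.one_rpow]
    have e3 : u ^ (2 - 2 * a) = u * (u ^ (-a) * (u ^ (a - 1))⁻¹) := by
      rw [← Real.rpow_neg hu.le, ← Real.rpow_add hu, ← Real.rpow_one_add' hu.le (by linarith)]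
      congr 1; ring
    rw [e3]
    have h1 : (1 - u) ≠ 0 := by linarith
    have h2 : (1 - 2 * a) ≠ 0 := by linarith
    have h3 : (2 - 2 * a) ≠ 0 := by linarith
    have h4 : u ^ (a - 1) ≠ 0 := by positivity
    generalize u ^ (a - 1) = X at *
    generalize u ^ (-a) = Y at *
    have h5 : (1 - a) ≠ 0 := by linarith
    have h6 : u ≠ 0 := hu.ne'
    field_simp
    ring
  · have hc : Continuous fun s : ℝ => (s + u * (1 - s)) ^ (1 - 2 * a) :=
      Continuous.rpow_const (by fun_prop) (fun _ => Or.inr (by linarith))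
    exact (hc.integrableOn_Icc (a := 0) (b := 1)).mono_set Ioo_subset_Icc_self
  · exact (aux_int_rpow (1 - 2 * a) (by linarith)).1

lemma aux_main (a : ℝ) (ha : 0 < a) (ha2 : a < 1 / 2) :
    (∫ s in Set.Ioo (0 : ℝ) 1, s ^ (-(2 * a)) *
        ∫ t in Set.Ioo (0 : ℝ) (1 - s), hypF (2 * a) a (1 + a) (-t / s))
      = a * (π * Real.cot (π * a)) / ((1 - 2 * a) * (2 - 2 * a)) := by
  rw [setIntegral_congr_fun measurableSet_Ioo (fun s hs => aux_swap1 a s ha ha2 hs.1 hs.2)]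
  rw [integral_integral_swap]
  · have : ∀ u ∈ Ioo (0 : ℝ) 1, (∫ s in Ioo (0 : ℝ) 1, a * auxG a s u)
        = a * (1 / ((1 - 2 * a) * (2 - 2 * a))) * ((u ^ (a - 1) - u ^ (-a)) / (1 - u)) := by
      intro u hu
      rw [integral_const_mul, aux_sint a u ha ha2 hu.1 hu.2, mul_assoc]
    rw [setIntegral_congr_fun measurableSet_Ioo this, integral_const_mul,
      aux_integral_cot a ha ha2]
    ring
  · have hi : Integrable (fun z : ℝ × ℝ => (fun s : ℝ => s ^ (-(2 * a))) z.1 *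
        (fun u : ℝ => u ^ (a - 1)) z.2)
        ((volume.restrict (Ioo (0 : ℝ) 1)).prod (volume.restrict (Ioo (0 : ℝ) 1))) :=
      Integrable.mul_prod (aux_int_rpow _ (by linarith)).1 (aux_int_rpow _ (by linarith)).1
    have hm : AEStronglyMeasurable (fun z : ℝ × ℝ => auxG a z.1 z.2)
        ((volume.restrict (Ioo (0 : ℝ) 1)).prod (volume.restrict (Ioo (0 : ℝ) 1))) :=
      Measurable.aestronglyMeasurable (by unfold auxG; fun_prop)
    refine (hi.mono' hm ?_).const_mul a
    rw [Measure.prod_restrict]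
    filter_upwards [ae_restrict_mem (measurableSet_Ioo.prod measurableSet_Ioo)] with z hz
    exact auxG_bound a z.1 z.2 ha ha2 hz.1.1 hz.1.2 hz.2.1

theorem stmt7 (k : ℕ) (hk : 3 ≤ k) :
    (∫ s in Set.Ioo (0 : ℝ) 1, s ^ (-(2 : ℝ) / k) *
        ∫ t in Set.Ioo (0 : ℝ) (1 - s), hypF (2 / k) (1 / k) (1 + 1 / k) (-t / s))
      = (k : ℝ) * π * Real.cot (π / k) / (2 * ((k : ℝ) - 2) * ((k : ℝ) - 1)) := by
  have hk' : (3 : ℝ) ≤ k := by exact_mod_cast hk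
  have hk0 : (0 : ℝ) < k := by linarith
  have h := aux_main (1 / (k : ℝ)) (by positivity)
    (one_div_lt_one_div_of_lt (by norm_num) (by linarith))
  have e1 : -(2 * (1 / (k : ℝ))) = -(2 : ℝ) / k := by ring
  have e2 : 2 * (1 / (k : ℝ)) = 2 / k := by ring
  have e3 : π * (1 / (k : ℝ)) = π / k := by ring
  rw [e1, e2, e3] at h
  rw [h]
  generalize Real.cot (π / k) = C
  have h1 : (k : ℝ) - 2 ≠ 0 := by linarith
  have h2 : (k : ℝ) - 1 ≠ 0 := by linarith
  have e4 : (1 - 2 / (k : ℝ)) = (k - 2) / k := by field_simp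
  have e5 : (2 - 2 / (k : ℝ)) = 2 * (k - 1) / k := by field_simp
  rw [e4, e5]
  field_simp
end

section
/- Fix an integer k ≥ 2 and 1 ≤ r ≤ k-1. Let X_{n,r} = Σ_{i=0}^{n-1} p_{r,i} where p_{r,i} = ∫_0^∞ (x^{r-1}e^{-x}/Γ(r)) (Γ(k,x)/Γ(k))^i dx (the probability that node i+1 is an r-record on a path of n nodes). Then E[X_{n,r}] ~ η_{k,r} n^{1 - r/k} as n → ∞, where η_{k,r} = ((k!)^{r/k}/(k-r)) · Γ(r/k)/Γ(r). -/
open MeasureTheory Real Set Filter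

theorem cesaro_aux (a : ℕ → ℝ) (s L : ℝ) (hs1 : s < 1)
    (h : Tendsto (fun n : ℕ => (n:ℝ) ^ s * a n) atTop (nhds L)) :
    Tendsto (fun n : ℕ => (∑ i ∈ Finset.range n, a i) / (n:ℝ) ^ (1 - s)) atTop
      (nhds (L / (1 - s))) := by
  have hs : 0 < 1 - s := by linarith
  set g : ℕ → ℝ := fun i => ((i + 1 : ℕ) : ℝ) ^ (1 - s) - (i : ℝ) ^ (1 - s) with hg
  have hgpos : ∀ i, 0 < g i := fun i => by
    have := Real.rpow_lt_rpow (x := (i:ℝ)) (y := ((i+1:ℕ):ℝ)) (by positivity) (by push_cast; linarith) hs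
    simp only [hg]; linarith
  have hsum : ∀ n, ∑ i ∈ Finset.range n, g i = (n:ℝ) ^ (1 - s) := fun n => by
    rw [hg, Finset.sum_range_sub (fun i : ℕ => (i:ℝ) ^ (1 - s))]
    simp [Real.zero_rpow hs.ne']
  have hg1 : Tendsto (fun n : ℕ => (n:ℝ) ^ s * g n) atTop (nhds (1 - s)) := by
    have hd : HasDerivAt (fun x : ℝ => x ^ (1 - s)) (1 - s) 1 := by
      have := Real.hasDerivAt_rpow_const (x := 1) (p := 1 - s) (Or.inl one_ne_zero)
      simpa using this
    have h1 := hd.tendsto_slope_zero_right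
    have h2 : Tendsto (fun n : ℕ => ((n:ℝ))⁻¹) atTop (nhdsWithin 0 (Ioi 0)) :=
      tendsto_inv_atTop_nhdsGT_zero.comp tendsto_natCast_atTop_atTop
    refine (h1.comp h2).congr' ?_
    filter_upwards [eventually_gt_atTop 0] with n hn
    have hn' : (0:ℝ) < n := by exact_mod_cast hn
    simp only [Function.comp, hg, smul_eq_mul, inv_inv, Real.one_rpow]
    have e1 : (1 + (n:ℝ)⁻¹) = ((n+1:ℕ):ℝ) / n := by push_cast; field_simp
    rw [e1, Real.div_rpow (by positivity) hn'.le]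
    have e2 : (n:ℝ) = (n:ℝ)^s * (n:ℝ)^(1-s) := by
      rw [← Real.rpow_add hn']; simp
    have := Real.rpow_pos_of_pos hn' (1-s)
    nth_rewrite 1 [e2]
    field_simp
  have hlo : (fun i => a i - L / (1 - s) * g i) =o[atTop] g := by
    rw [Asymptotics.isLittleO_iff_tendsto (fun i hi => absurd hi (hgpos i).ne')]
    have h3 := (h.div hg1 hs.ne').sub_const (L / (1-s))
    rw [sub_self] at h3
    refine h3.congr' ?_
    filter_upwards [eventually_gt_atTop 0] with n hn
    have hn' : (0:ℝ) < n := by exact_mod_cast hn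
    have := Real.rpow_pos_of_pos hn' s
    have := hgpos n
    simp only [Pi.div_apply]
    field_simp
  have h4 := hlo.sum_range (fun i => (hgpos i).le) (by
    simp only [hsum]
    exact (tendsto_rpow_atTop hs).comp tendsto_natCast_atTop_atTop)
  simp only [hsum] at h4
  have h5 := h4.tendsto_div_nhds_zero.add_const (L / (1-s))
  rw [zero_add] at h5
  refine h5.congr' ?_
  filter_upwards [eventually_gt_atTop 0] with n hn
  have hn' : (0:ℝ) < n := by exact_mod_cast hn
  have := Real.rpow_pos_of_pos hn' (1-s)
  rw [Finset.sum_sub_distrib, ← Finset.mul_sum, hsum]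
  field_simp
  ring

theorem gam_int (k : ℕ) (hk : 1 ≤ k) :
    IntegrableOn (fun t : ℝ => t ^ (k - 1) * Real.exp (-t)) (Ioi 0) := by
  have h := Real.GammaIntegral_convergent (s := k) (by exact_mod_cast hk)
  refine h.congr_fun (fun x hx => ?_) measurableSet_Ioi
  have : ((k:ℝ) - 1) = ((k-1:ℕ):ℝ) := by push_cast [hk]; ring
  simp only [this, Real.rpow_natCast]; ring

theorem gam_val (k : ℕ) (hk : 1 ≤ k) :
    ∫ t in Ioi (0:ℝ), t ^ (k - 1) * Real.exp (-t) = Real.Gamma k := by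
  rw [Real.Gamma_eq_integral (by exact_mod_cast hk)]
  refine setIntegral_congr_fun measurableSet_Ioi (fun x hx => ?_)
  have : ((k:ℝ) - 1) = ((k-1:ℕ):ℝ) := by push_cast [hk]; ring
  simp only [this, Real.rpow_natCast]; ring

theorem ug_eq (k : ℕ) (hk : 1 ≤ k) (x : ℝ) (hx : 0 ≤ x) :
    upperGamma k x = ((k-1).factorial : ℝ) - ∫ t in (0:ℝ)..x, t ^ (k - 1) * Real.exp (-t) := by
  have h := intervalIntegral.integral_interval_add_Ioi (gam_int k hk)
    ((gam_int k hk).mono_set (Ioi_subset_Ioi hx))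
  rw [gam_val k hk] at h
  have h2 : Real.Gamma k = ((k-1).factorial : ℝ) := by
    rw [← Real.Gamma_nat_eq_factorial]; congr 1; push_cast [hk]; ring
  rw [upperGamma, ← h2, ← h]; ring

theorem low_ub (k : ℕ) (hk : 1 ≤ k) (x : ℝ) (hx : 0 ≤ x) :
    ∫ t in (0:ℝ)..x, t ^ (k - 1) * Real.exp (-t) ≤ x ^ k / k := by
  have : ∫ t in (0:ℝ)..x, t ^ (k - 1) = x ^ k / k := by
    rw [integral_pow]; have : k - 1 + 1 = k := by omega
    have h2 : (((k-1:ℕ):ℝ)+1) = k := by exact_mod_cast this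
    rw [this, h2]; simp [show k ≠ 0 by omega]
  rw [← this]
  refine intervalIntegral.integral_mono_on hx (Continuous.intervalIntegrable (by fun_prop) _ _) (Continuous.intervalIntegrable (by fun_prop) _ _) (fun t ht => ?_)
  have h1 : Real.exp (-t) ≤ 1 := Real.exp_le_one_iff.2 (by linarith [ht.1])
  exact mul_le_of_le_one_right (pow_nonneg ht.1 _) h1

theorem low_lb (k : ℕ) (hk : 1 ≤ k) (x : ℝ) (hx : 0 ≤ x) :
    Real.exp (-x) * (x ^ k / k) ≤ ∫ t in (0:ℝ)..x, t ^ (k - 1) * Real.exp (-t) := by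
  have : ∫ t in (0:ℝ)..x, t ^ (k - 1) = x ^ k / k := by
    rw [integral_pow]; have : k - 1 + 1 = k := by omega
    have h2 : (((k-1:ℕ):ℝ)+1) = k := by exact_mod_cast this
    rw [this, h2]; simp [show k ≠ 0 by omega]
  rw [← this, ← intervalIntegral.integral_const_mul]
  refine intervalIntegral.integral_mono_on hx (Continuous.intervalIntegrable (by fun_prop) _ _) (Continuous.intervalIntegrable (by fun_prop) _ _) (fun t ht => ?_)
  have h1 : Real.exp (-x) ≤ Real.exp (-t) := Real.exp_le_exp.2 (by linarith [ht.2])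
  rw [mul_comm]
  exact mul_le_mul_of_nonneg_left h1 (pow_nonneg ht.1 _)

/-- abstract properties of the survival function -/
theorem q_props (k : ℕ) (hk : 1 ≤ k) : ∃ q : ℝ → ℝ, Continuous q ∧
    (∀ x, 0 ≤ x → upperGamma k x / ((k-1).factorial : ℝ) = q x) ∧
    (∀ x, 0 ≤ x → 0 ≤ q x) ∧
    (∀ x, 0 ≤ x → 1 - q x ≤ x ^ k / k.factorial) ∧
    (∀ x, 0 ≤ x → Real.exp (-x) * (x ^ k / k.factorial) ≤ 1 - q x) ∧
    (∀ x, 1 ≤ x → q x ≤ q 1) := by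
  have hf : (0:ℝ) < (k-1).factorial := by positivity
  have hk0 : (0:ℝ) < k := by exact_mod_cast hk
  have hfk : (k.factorial : ℝ) = k * (k-1).factorial := by
    rw [← Nat.mul_factorial_pred (by omega : k ≠ 0)]; push_cast; ring
  have hu : ∀ x, 0 ≤ x → upperGamma k x / ((k-1).factorial : ℝ) =
      1 - (∫ t in (0:ℝ)..x, t ^ (k - 1) * Real.exp (-t)) / ((k-1).factorial : ℝ) := by
    intro x hx
    rw [ug_eq k hk x hx]; field_simp
  refine ⟨fun x => 1 - (∫ t in (0:ℝ)..x, t ^ (k - 1) * Real.exp (-t)) / ((k-1).factorial : ℝ), ?_, hu, ?_, ?_, ?_, ?_⟩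
  · have := intervalIntegral.continuous_primitive (μ := volume) (f := fun t : ℝ => t ^ (k - 1) * Real.exp (-t))
      (fun a b => Continuous.intervalIntegrable (by fun_prop) _ _) 0
    fun_prop
  · intro x hx
    beta_reduce
    rw [← hu x hx]
    refine div_nonneg ?_ hf.le
    exact setIntegral_nonneg measurableSet_Ioi (fun t ht => mul_nonneg (pow_nonneg (hx.trans (le_of_lt ht)) _) (Real.exp_pos _).le)
  · intro x hx
    have := div_le_div_of_nonneg_right (low_ub k hk x hx) hf.le
    rw [hfk, ← div_div]; linarith
  · intro x hx
    have := div_le_div_of_nonneg_right (low_lb k hk x hx) hf.le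
    rw [hfk, ← div_div, ← mul_div_assoc]; linarith
  · intro x hx
    have : ∫ t in (0:ℝ)..1, t ^ (k - 1) * Real.exp (-t) ≤ ∫ t in (0:ℝ)..x, t ^ (k - 1) * Real.exp (-t) := by
      refine intervalIntegral.integral_mono_interval le_rfl zero_le_one hx ?_ (Continuous.intervalIntegrable (by fun_prop) _ _)
      refine (ae_restrict_iff' measurableSet_Ioc).2 (Eventually.of_forall fun t ht => ?_)
      exact mul_nonneg (pow_nonneg ht.1.le _) (Real.exp_pos _).le
    have := div_le_div_of_nonneg_right this hf.le
    simp only; linarith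

theorem core (k r : ℕ) (hk : 1 ≤ k) (hr : 1 ≤ r) (q : ℝ → ℝ) (hc : Continuous q)
    (h0 : ∀ x, 0 ≤ x → 0 ≤ q x)
    (hub : ∀ x, 0 ≤ x → 1 - q x ≤ x ^ k / k.factorial)
    (hlb : ∀ x, 0 ≤ x → Real.exp (-x) * (x ^ k / k.factorial) ≤ 1 - q x)
    (hone : ∀ x, 1 ≤ x → q x ≤ q 1) :
    Tendsto (fun n : ℕ => (n:ℝ) ^ ((r:ℝ)/k) *
      ∫ x in Ioi (0:ℝ), x ^ (r-1) * Real.exp (-x) * q x ^ n) atTop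
      (nhds ((1 / (k.factorial:ℝ)) ^ (-((r:ℝ)/k)) * (1 / k) * Real.Gamma ((r:ℝ)/k))) := by
  have hfk : (0:ℝ) < k.factorial := by positivity
  have hk0 : (0:ℝ) < k := by exact_mod_cast hk
  have hr0 : (0:ℝ) < r := by exact_mod_cast hr
  have hrc : ((r:ℝ) - 1) = ((r-1:ℕ):ℝ) := by push_cast [hr]; ring
  have hle1 : ∀ x, 0 ≤ x → q x ≤ 1 := fun x hx => by
    have := hlb x hx
    have : 0 ≤ Real.exp (-x) * (x ^ k / k.factorial) := by positivity
    linarith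
  have hq1 : q 1 < 1 := by
    have := hlb 1 zero_le_one
    have : 0 < Real.exp (-1) * ((1:ℝ) ^ k / k.factorial) := by positivity
    linarith
  have hFint : ∀ n : ℕ, IntegrableOn (fun x => x ^ (r-1) * Real.exp (-x) * q x ^ n) (Ioi 0) := by
    intro n
    refine Integrable.mono' (gam_int r hr) (by
      exact Continuous.aestronglyMeasurable (by fun_prop)) ?_
    refine (ae_restrict_iff' measurableSet_Ioi).2 (Eventually.of_forall fun x hx => ?_)
    have hx : 0 < x := hx
    have h1 := h0 x hx.le
    rw [Real.norm_of_nonneg (by positivity)]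
    exact mul_le_of_le_one_right (by positivity) (pow_le_one₀ h1 (hle1 x hx.le))
  set F : ℕ → ℝ → ℝ := fun n x => x ^ (r-1) * Real.exp (-x) * q x ^ n with hF
  set b : ℕ → ℝ := fun n => (n:ℝ) ^ (-(1/(k:ℝ))) with hb
  set H : ℕ → ℝ → ℝ := fun n y => (Iic 1).indicator
      (fun x => y ^ (r-1) * Real.exp (-x) * q x ^ n) (b n * y) with hH
  have hbpos : ∀ n : ℕ, 0 < n → 0 < b n := fun n hn =>
    Real.rpow_pos_of_pos (by exact_mod_cast hn) _
  have hbk : ∀ n : ℕ, 0 < n → n * b n ^ k = 1 := fun n hn => by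
    have hn' : (0:ℝ) < n := by exact_mod_cast hn
    rw [hb]; simp only
    rw [← Real.rpow_natCast, ← Real.rpow_mul hn'.le]
    rw [show -(1/(k:ℝ)) * k = -1 by field_simp, Real.rpow_neg_one]
    field_simp
  have hbr : ∀ n : ℕ, 0 < n → (n:ℝ) ^ ((r:ℝ)/k) * b n ^ r = 1 := fun n hn => by
    have hn' : (0:ℝ) < n := by exact_mod_cast hn
    rw [hb]; simp only
    rw [← Real.rpow_natCast, ← Real.rpow_mul hn'.le, ← Real.rpow_add hn']
    rw [show (r:ℝ)/k + -(1/(k:ℝ)) * r = 0 by field_simp; ring, Real.rpow_zero]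
  have hb0 : Tendsto b atTop (nhds 0) :=
    (tendsto_rpow_neg_atTop (by positivity : (0:ℝ) < 1/k)).comp tendsto_natCast_atTop_atTop
  -- splitting
  have hsplit : ∀ n : ℕ, 0 < n → (n:ℝ) ^ ((r:ℝ)/k) * ∫ x in Ioi (0:ℝ), F n x =
      (∫ y in Ioi (0:ℝ), H n y) + (n:ℝ) ^ ((r:ℝ)/k) * ∫ x in Ioi (1:ℝ), F n x := by
    intro n hn
    have hbn := hbpos n hn
    have e1 : ∫ x in Ioi (0:ℝ), F n x = (∫ x in Ioc (0:ℝ) 1, F n x) + ∫ x in Ioi (1:ℝ), F n x := by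
      rw [← Ioc_union_Ioi_eq_Ioi (zero_le_one' ℝ)]
      exact setIntegral_union Ioc_disjoint_Ioi_same measurableSet_Ioi
        ((hFint n).mono_set Ioc_subset_Ioi_self) ((hFint n).mono_set (Ioi_subset_Ioi zero_le_one))
    have e2 : ∫ x in Ioc (0:ℝ) 1, F n x = ∫ x in Ioi (0:ℝ), (Iic 1).indicator (F n) x := by
      rw [setIntegral_indicator measurableSet_Iic, Ioi_inter_Iic]
    have e3 := integral_comp_mul_left_Ioi (fun x => (Iic 1).indicator (F n) x) 0 hbn
    rw [mul_zero, smul_eq_mul] at e3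
    have e4 : ∀ y, (Iic 1).indicator (F n) (b n * y) = b n ^ (r-1) * H n y := by
      intro y
      simp only [hH, hF, indicator]
      split_ifs
      · rw [mul_pow]; ring
      · simp
    simp only [e4] at e3
    rw [integral_const_mul] at e3
    have e5 : ∫ x in Ioi (0:ℝ), (Iic 1).indicator (F n) x = b n ^ r * ∫ y in Ioi (0:ℝ), H n y := by
      have : b n ^ r = b n * b n ^ (r-1) := by
        rw [← pow_succ']; congr 1; omega
      rw [this, mul_assoc, e3]; field_simp
    rw [e1, e2, e5, mul_add, ← mul_assoc, hbr n hn, one_mul]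
  -- tail
  have htail : Tendsto (fun n : ℕ => (n:ℝ) ^ ((r:ℝ)/k) * ∫ x in Ioi (1:ℝ), F n x) atTop (nhds 0) := by
    have hq10 := h0 1 zero_le_one
    have t1 := (tendsto_pow_const_mul_const_pow_of_abs_lt_one r
      (show |q 1| < 1 by rwa [abs_of_nonneg hq10])).mul_const (Real.Gamma r)
    rw [zero_mul] at t1
    refine squeeze_zero' (Eventually.of_forall fun n => ?_) ?_ t1
    · refine mul_nonneg (by positivity) (setIntegral_nonneg measurableSet_Ioi fun x hx => ?_)
      have hx : 0 < x := lt_trans one_pos hx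
      have := h0 x hx.le
      simp only [hF]; positivity
    · filter_upwards [eventually_gt_atTop 0] with n hn
      have hn1 : (1:ℝ) ≤ n := by exact_mod_cast hn
      have i1 : ∫ x in Ioi (1:ℝ), F n x ≤ q 1 ^ n * Real.Gamma r := by
        rw [← gam_val r hr, ← integral_const_mul]
        refine le_trans (setIntegral_mono_on ((hFint n).mono_set (Ioi_subset_Ioi zero_le_one))
          (((gam_int r hr).mono_set (Ioi_subset_Ioi zero_le_one)).const_mul (q 1 ^ n)) measurableSet_Ioi ?_)
          (setIntegral_mono_set ((gam_int r hr).const_mul _) ?_ (Ioi_subset_Ioi zero_le_one).eventuallyLE)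
        · intro x hx
          have hx1 : 1 < x := hx
          have hx : 0 < x := lt_trans one_pos hx
          have := pow_le_pow_left₀ (h0 x hx.le) (hone x hx1.le) n
          rw [mul_comm (q 1 ^ n)]
          exact mul_le_mul_of_nonneg_left this (by positivity)
        · refine (ae_restrict_iff' measurableSet_Ioi).2 (Eventually.of_forall fun x hx => ?_)
          have hx : 0 < x := hx
          simp only [Pi.zero_apply]; positivity
      have i2 : (n:ℝ) ^ ((r:ℝ)/k) ≤ (n:ℝ) ^ r := by
        rw [← Real.rpow_natCast]
        exact Real.rpow_le_rpow_of_exponent_le hn1 (div_le_self hr0.le (by exact_mod_cast hk))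
      have := Real.Gamma_pos_of_pos hr0
      rw [mul_assoc]
      exact mul_le_mul i2 i1 (setIntegral_nonneg measurableSet_Ioi fun x hx => by
        have hx : 0 < x := lt_trans one_pos hx
        have := h0 x hx.le
        simp only [hF]; positivity) (by positivity)
  -- main
  have hmain : Tendsto (fun n : ℕ => ∫ y in Ioi (0:ℝ), H n y) atTop
      (nhds (∫ y in Ioi (0:ℝ), y ^ ((r:ℝ)-1) * Real.exp (-(1 / (k.factorial:ℝ)) * y ^ (k:ℝ)))) := by
    refine tendsto_integral_filter_of_dominated_convergence
      (fun y => y ^ ((r:ℝ)-1) * Real.exp (-(Real.exp (-1) / (k.factorial:ℝ)) * y ^ (k:ℝ))) ?_ ?_ ?_ ?_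
    · refine Eventually.of_forall fun n => Measurable.aestronglyMeasurable ?_
      have : H n = ((fun y => b n * y) ⁻¹' Iic 1).indicator
          (fun y => y ^ (r-1) * Real.exp (-(b n * y)) * q (b n * y) ^ n) := by
        ext y; simp only [hH, indicator, mem_preimage]
      rw [this]
      exact (Continuous.measurable (by fun_prop)).indicator
        ((measurable_const_mul (b n)) measurableSet_Iic)
    · filter_upwards [eventually_gt_atTop 0] with n hn
      refine (ae_restrict_iff' measurableSet_Ioi).2 (Eventually.of_forall fun y hy => ?_)
      have hy : 0 < y := hy
      have hx := mul_pos (hbpos n hn) hy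
      simp only [hH, indicator, mem_Iic]
      rw [hrc, Real.rpow_natCast, Real.rpow_natCast]
      split_ifs with hx1
      · have := h0 _ hx.le
        rw [Real.norm_of_nonneg (by positivity), mul_assoc]
        refine mul_le_mul_of_nonneg_left ?_ (by positivity)
        have j1 : Real.exp (-(b n * y)) ≤ 1 := Real.exp_le_one_iff.2 (by linarith)
        refine le_trans (mul_le_of_le_one_left (by positivity) j1) ?_
        have j2 : q (b n * y) ≤ Real.exp (-(Real.exp (-1) * ((b n * y) ^ k / k.factorial))) := by
          have j3 := hlb _ hx.le
          have j4 : Real.exp (-1) * ((b n * y) ^ k / k.factorial) ≤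
              Real.exp (-(b n * y)) * ((b n * y) ^ k / k.factorial) :=
            mul_le_mul_of_nonneg_right (Real.exp_le_exp.2 (by linarith)) (by positivity)
          have j5 := Real.add_one_le_exp (-(Real.exp (-1) * ((b n * y) ^ k / k.factorial)))
          linarith
        refine le_trans (pow_le_pow_left₀ this j2 n) (le_of_eq ?_)
        rw [← Real.exp_nat_mul]
        congr 1
        rw [mul_pow]
        have := hbk n hn
        calc _ = -(Real.exp (-1) / k.factorial) * y ^ k * (n * b n ^ k) := by ring
          _ = _ := by rw [this, mul_one]
      · rw [norm_zero]; positivity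
    · exact integrableOn_rpow_mul_exp_neg_mul_rpow (by linarith) hk0 (by positivity)
    · refine (ae_restrict_iff' measurableSet_Ioi).2 (Eventually.of_forall fun y hy => ?_)
      have hy : 0 < y := hy
      have hby : Tendsto (fun n => b n * y) atTop (nhds 0) := by simpa using hb0.mul_const y
      have hexp : Tendsto (fun n => Real.exp (-(b n * y))) atTop (nhds 1) := by
        simpa [Function.comp_def] using (Real.continuous_exp.tendsto _).comp hby.neg
      have hpow : Tendsto (fun n => (1 + (q (b n * y) - 1)) ^ n) atTop
          (nhds (Real.exp (-(y ^ k / k.factorial)))) := by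
        refine Real.tendsto_one_add_pow_exp_of_tendsto ?_
        have hh : Tendsto (fun n : ℕ => (n:ℝ) * (1 - q (b n * y))) atTop (nhds (y ^ k / k.factorial)) := by
          have l1 := hexp.mul_const (y ^ k / k.factorial)
          rw [one_mul] at l1
          refine tendsto_of_tendsto_of_tendsto_of_le_of_le' l1 tendsto_const_nhds ?_ ?_
          · filter_upwards [eventually_gt_atTop 0] with n hn
            have hx := mul_pos (hbpos n hn) hy
            have := mul_le_mul_of_nonneg_left (hlb _ hx.le) (Nat.cast_nonneg (α := ℝ) n)
            refine le_trans (le_of_eq ?_) this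
            rw [mul_pow]
            calc _ = Real.exp (-(b n * y)) * (y ^ k / k.factorial) * (n * b n ^ k) := by
                  rw [hbk n hn, mul_one]
              _ = _ := by ring
          · filter_upwards [eventually_gt_atTop 0] with n hn
            have hx := mul_pos (hbpos n hn) hy
            have := mul_le_mul_of_nonneg_left (hub _ hx.le) (Nat.cast_nonneg (α := ℝ) n)
            refine le_trans this (le_of_eq ?_)
            rw [mul_pow]
            calc _ = (y ^ k / k.factorial) * (n * b n ^ k) := by ring
              _ = _ := by rw [hbk n hn, mul_one]
        refine hh.neg.congr fun n => ?_
        ring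
      have hall := (hexp.const_mul (y ^ (r-1))).mul hpow
      have e : y ^ ((r:ℝ)-1) * Real.exp (-(1 / (k.factorial:ℝ)) * y ^ (k:ℝ)) =
          y ^ (r-1) * 1 * Real.exp (-(y ^ k / k.factorial)) := by
        rw [hrc, Real.rpow_natCast, Real.rpow_natCast, mul_one]
        congr 2; ring
      rw [e]
      refine hall.congr' ?_
      filter_upwards [hby.eventually (eventually_le_nhds one_pos)] with n hn
      simp only [hH]
      rw [indicator_of_mem (by exact hn)]
      simp
  have hval := integral_rpow_mul_exp_neg_mul_rpow (p := k) (q := (r:ℝ)-1) (b := 1 / (k.factorial:ℝ))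
    hk0 (by linarith) (by positivity)
  rw [hval] at hmain
  have hfin := hmain.add htail
  rw [add_zero, sub_add_cancel] at hfin
  rw [← neg_div]
  refine hfin.congr' ?_
  filter_upwards [eventually_gt_atTop 0] with n hn
  exact (hsplit n hn).symm

theorem stmt13 (k r : ℕ) (hk : 2 ≤ k) (hr1 : 1 ≤ r) (hr2 : r ≤ k - 1) :
    Tendsto (fun n : ℕ =>
        (∑ i ∈ Finset.range n, ∫ x in Set.Ioi (0 : ℝ),
            x ^ (r - 1) * Real.exp (-x) / Real.Gamma r *
              (upperGamma k x / (Nat.factorial (k - 1) : ℝ)) ^ i) /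
          ((Nat.factorial k : ℝ) ^ ((r : ℝ) / k) / ((k : ℝ) - r) *
              (Real.Gamma ((r : ℝ) / k) / Real.Gamma r) * (n : ℝ) ^ (1 - (r : ℝ) / k)))
      atTop (nhds 1) := by
  have hk0 : (0:ℝ) < k := by exact_mod_cast (by omega : 0 < k)
  have hr0 : (0:ℝ) < r := by exact_mod_cast hr1
  have hrk : (r:ℝ) < k := by exact_mod_cast (by omega : r < k)
  have hG := Real.Gamma_pos_of_pos hr0
  have hG2 := Real.Gamma_pos_of_pos (div_pos hr0 hk0)
  obtain ⟨q, hc, hq, h0, hub, hlb, hone⟩ := q_props k (by omega)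
  have hcore := core k r (by omega) hr1 q hc h0 hub hlb hone
  have hp : ∀ i : ℕ, ∫ x in Set.Ioi (0 : ℝ), x ^ (r - 1) * Real.exp (-x) / Real.Gamma r *
      (upperGamma k x / (Nat.factorial (k - 1) : ℝ)) ^ i =
      (∫ x in Ioi (0:ℝ), x ^ (r-1) * Real.exp (-x) * q x ^ i) / Real.Gamma r := by
    intro i
    rw [← integral_div]
    refine setIntegral_congr_fun measurableSet_Ioi fun x hx => ?_
    rw [hq x (le_of_lt hx)]; ring
  simp only [hp]
  have h1 := hcore.div_const (Real.Gamma r)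
  simp only [mul_div_assoc] at h1
  have h2 := cesaro_aux _ _ _ ((div_lt_one hk0).2 hrk) h1
  set η := (Nat.factorial k : ℝ) ^ ((r : ℝ) / k) / ((k : ℝ) - r) *
              (Real.Gamma ((r : ℝ) / k) / Real.Gamma r) with hη
  have hkr : (0:ℝ) < k - r := by linarith
  have hηpos : 0 < η := by positivity
  have hL : (1 / (k.factorial:ℝ)) ^ (-((r:ℝ)/k)) * (1 / k) * (Real.Gamma ((r:ℝ)/k) / Real.Gamma r)
      / (1 - (r:ℝ)/k) = η := by
    rw [one_div, Real.inv_rpow (by positivity), Real.rpow_neg (by positivity), inv_inv, hη]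
    have : 1 - (r:ℝ)/k = (k - r)/k := by field_simp
    rw [this]; field_simp
  rw [hL] at h2
  have h3 := h2.div_const η
  rw [show (nhds (1:ℝ)) = nhds (η / η) by rw [div_self hηpos.ne']]
  refine Tendsto.congr (fun n => ?_) h3
  rw [div_div, mul_comm η]
end
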